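/- arXiv:2406.09962 — 7 statements merged into one kernel-verified Lean document; each statement's English description precedes it below -/
import Mathlib

section
/- Let N ≥ 1 and let G be a subgroup of the permutation group of Fin N. For α ∈ G let U_α be the permutation matrix on the index set (Fin N → Fin 2) of the bijection x ↦ x ∘ α. Then the set {A ∈ SU(2^N) : U_α A U_α⁻¹ = A for all α ∈ G} is path-connected. -/
open Matrix

/-- The permutation matrix on the index set `I → Fin 2` associated to a permutation `α` of
`I`, corresponding to the bijection `x ↦ x ∘ α`: its `(x, y)` entry is `1` if `y = x ∘ α`
and `0` otherwise. -/
def qubitPermMatrix {I : Type*} [DecidableEq I] [Fintype I] (α : Equiv.Perm I) :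
    Matrix (I → Fin 2) (I → Fin 2) ℂ :=
  Matrix.of fun x y => if y = x ∘ α then 1 else 0

lemma exists_unitary_path {A : Type*} [CStarAlgebra A] (u : A) (hu : u ∈ unitary A)
    (hfin : (spectrum ℂ u).Finite) :
    ∃ γ : ℝ → A, Continuous γ ∧ (∀ t, γ t ∈ unitary A) ∧ γ 0 = 1 ∧ γ 1 = u ∧
      ∀ b, Commute u b → Commute (star u) b → ∀ t, Commute (γ t) b := by
  let v : unitary A := ⟨u, hu⟩
  have key : selfAdjoint.expUnitary (Unitary.argSelfAdjoint v) = v := by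
    ext
    have : ContinuousOn Complex.arg (spectrum ℂ (v : A)) := hfin.continuousOn _
    rw [selfAdjoint.expUnitary_coe, Unitary.argSelfAdjoint_coe,
      ← CFC.exp_eq_normedSpace_exp (𝕜 := ℂ),
      ← cfc_comp_smul .., ← cfc_comp' ..]
    conv_rhs => rw [← cfc_id' ℂ (v : A)]
    refine cfc_congr fun y hy ↦ ?_
    have hy₁ : ‖y‖ = 1 := spectrum.norm_eq_one_of_unitary v.2 hy
    have : Complex.I * y.arg = Complex.log y :=
      Complex.ext (by simp [Complex.log_re, hy₁]) (by simp [Complex.log_im])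
    have hy0 : y ≠ 0 := by rintro rfl; simp at hy₁
    simpa [← Complex.exp_eq_exp_ℂ, this] using Complex.exp_log hy0
  refine ⟨fun t => (selfAdjoint.expUnitary (t • Unitary.argSelfAdjoint v) : A), ?_, ?_, ?_, ?_, ?_⟩
  · exact continuous_subtype_val.comp (selfAdjoint.continuous_expUnitary.comp (continuous_id.smul continuous_const))
  · intro t; exact (selfAdjoint.expUnitary _).2
  · simp
  · simp only [one_smul]; rw [key]
  · intro b h1 h2 t
    have hc : Commute (cfc (fun z : ℂ => (z.arg : ℂ)) u) b := h1.cfc h2 _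
    have hc' : Commute (Complex.I • (t • cfc (fun z : ℂ => (z.arg : ℂ)) u)) b :=
      (hc.smul_left t).smul_left Complex.I
    simp only [selfAdjoint.expUnitary_coe]
    let +nondep : NormedAlgebra ℚ A := .restrictScalars ℚ ℂ A
    exact hc'.exp_left

open scoped Matrix.Norms.L2Operator in
lemma exists_unitary_path_matrix {n : Type*} [Fintype n] [DecidableEq n] (u : Matrix n n ℂ)
    (hu : u * uᴴ = 1) :
    ∃ γ : ℝ → Matrix n n ℂ, Continuous γ ∧ (∀ t, γ t * (γ t)ᴴ = 1) ∧ γ 0 = 1 ∧ γ 1 = u ∧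
      ∀ b, u * b = b * u → ∀ t, γ t * b = b * γ t := by
  have hu' : uᴴ * u = 1 := mul_eq_one_comm.mp hu
  obtain ⟨γ, h1, h2, h3, h4, h5⟩ := exists_unitary_path u
    (Unitary.mem_iff.mpr ⟨hu', hu⟩) (Matrix.finite_spectrum u)
  refine ⟨γ, h1, fun t => (Unitary.mem_iff.mp (h2 t)).2, h3, h4, fun b hb t => h5 b hb ?_ t⟩
  change uᴴ * b = b * uᴴ
  calc uᴴ * b = uᴴ * b * (u * uᴴ) := by rw [hu, mul_one]
    _ = uᴴ * (b * u) * uᴴ := by simp only [mul_assoc]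
    _ = (uᴴ * u) * b * uᴴ := by rw [← hb]; simp only [mul_assoc]
    _ = b * uᴴ := by rw [hu', one_mul]

lemma qubitPermMatrix_isUnit_det {I : Type*} [DecidableEq I] [Fintype I] (α : Equiv.Perm I) :
    IsUnit (qubitPermMatrix α).det := by
  have : qubitPermMatrix α * qubitPermMatrix α⁻¹ = 1 := by
    ext x y
    simp only [qubitPermMatrix, Matrix.mul_apply, Matrix.of_apply, Matrix.one_apply, ite_mul,
      one_mul, zero_mul, Finset.sum_ite_eq', Finset.sum_ite_eq, Finset.mem_univ, if_true]
    have : (x ∘ α) ∘ (α⁻¹ : Equiv.Perm I) = x := by funext i; simp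
    rw [this]; simp only [eq_comm]
  exact (Matrix.isUnit_iff_isUnit_det _).mp (IsUnit.of_mul_eq_one _ this)

lemma qubitPermMatrix_conj_iff {I : Type*} [DecidableEq I] [Fintype I] (α : Equiv.Perm I)
    (A : Matrix (I → Fin 2) (I → Fin 2) ℂ) :
    qubitPermMatrix α * A * (qubitPermMatrix α)⁻¹ = A ↔
      A * qubitPermMatrix α = qubitPermMatrix α * A := by
  have h := qubitPermMatrix_isUnit_det α
  constructor
  · intro e
    conv_lhs => rw [← e]
    rw [mul_assoc, Matrix.nonsing_inv_mul _ h, mul_one]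
  · intro e
    rw [← e, mul_assoc, Matrix.mul_nonsing_inv _ h, mul_one]

/-- diagonal correction -/
noncomputable def corr {I : Type*} [DecidableEq I] [Fintype I] (c : ℂ) :
    Matrix (I → Fin 2) (I → Fin 2) ℂ :=
  Matrix.diagonal fun x => if x = 0 then c else 1

lemma corr_comm {I : Type*} [DecidableEq I] [Fintype I] (α : Equiv.Perm I) (c : ℂ) :
    corr c * qubitPermMatrix α = qubitPermMatrix α * corr c := by
  ext x y
  simp only [corr, Matrix.diagonal_mul, Matrix.mul_diagonal, qubitPermMatrix, Matrix.of_apply]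
  by_cases h : y = x ∘ α
  · have : y = 0 ↔ x = 0 := by
      subst h
      constructor
      · intro h; funext i; simpa using congrFun h (α.symm i)
      · rintro rfl; rfl
    simp [h] at this ⊢
    simp [this]
  · simp [h]

lemma corr_det {I : Type*} [DecidableEq I] [Fintype I] (c : ℂ) :
    (corr c : Matrix (I → Fin 2) (I → Fin 2) ℂ).det = c := by
  simp [corr, Matrix.det_diagonal, Finset.prod_ite_eq']

lemma corr_unitary {I : Type*} [DecidableEq I] [Fintype I] (c : ℂ) (hc : c * star c = 1) :
    (corr c : Matrix (I → Fin 2) (I → Fin 2) ℂ) * (corr c)ᴴ = 1 := by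
  rw [corr, Matrix.diagonal_conjTranspose, Matrix.diagonal_mul_diagonal, ← Matrix.diagonal_one]
  congr 1
  funext x
  by_cases h : x = 0 <;> simp [h]
  simpa using hc

lemma corr_one {I : Type*} [DecidableEq I] [Fintype I] :
    (corr 1 : Matrix (I → Fin 2) (I → Fin 2) ℂ) = 1 := by
  simp [corr]

lemma corr_continuous {I : Type*} [DecidableEq I] [Fintype I] :
    Continuous (corr : ℂ → Matrix (I → Fin 2) (I → Fin 2) ℂ) := by
  unfold corr
  refine Continuous.matrix_diagonal (continuous_pi fun x => ?_)
  split_ifs <;> fun_prop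

/-- For `N ≥ 1` and a subgroup `G` of the permutation group of `Fin N`, the set
`{A ∈ SU(2^N) : U_α A U_α⁻¹ = A for all α ∈ G}` is path-connected. -/
theorem GSU_isPathConnected (N : ℕ) (hN : 1 ≤ N) (G : Subgroup (Equiv.Perm (Fin N))) :
    IsPathConnected {A : Matrix (Fin N → Fin 2) (Fin N → Fin 2) ℂ |
        A * Aᴴ = 1 ∧ A.det = 1 ∧
        ∀ α ∈ G, qubitPermMatrix α * A * (qubitPermMatrix α)⁻¹ = A} := by
  simp only [qubitPermMatrix_conj_iff]
  refine ⟨1, ⟨by simp, by simp, by simp⟩, ?_⟩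
  rintro A ⟨hA, hdet, hcomm⟩
  obtain ⟨γ, h1, h2, h3, h4, h5⟩ := exists_unitary_path_matrix A hA
  have hd : ∀ t, (γ t).det * star (γ t).det = 1 := fun t => by
    rw [← Matrix.det_conjTranspose, ← Matrix.det_mul, h2, Matrix.det_one]
  have hd' : ∀ t, star (γ t).det * (γ t).det = 1 := fun t => by rw [mul_comm, hd]
  let δ : ℝ → Matrix (Fin N → Fin 2) (Fin N → Fin 2) ℂ := fun t => γ t * corr (star (γ t).det)
  have hδ : Continuous δ :=
    h1.mul (corr_continuous.comp (continuous_star.comp h1.matrix_det))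
  refine JoinedIn.ofLine (f := δ) hδ.continuousOn ?_ ?_ ?_
  · simp [δ, h3, corr_one]
  · simp [δ, h4, hdet, corr_one]
  · rintro _ ⟨t, -, rfl⟩
    refine ⟨?_, ?_, fun α hα => ?_⟩
    · simp only [δ]
      rw [Matrix.conjTranspose_mul, mul_assoc, ← mul_assoc (corr _), corr_unitary, one_mul, h2]
      rw [star_star, hd']
    · simp only [δ]
      rw [Matrix.det_mul, corr_det, hd]
    · simp only [δ]
      rw [mul_assoc, corr_comm, ← mul_assoc, h5 _ (hcomm α hα), mul_assoc]
end

section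
/- Let N ≥ 1. For μ : Fin N → Fin 4, let P_μ be the Pauli string, i.e. the matrix indexed by (Fin N → Fin 2) with entries (P_μ)_{x,y} = ∏_{j : Fin N} (σ_{μ(j)})_{x(j), y(j)}, where σ₀, σ₁, σ₂, σ₃ are the Pauli matrices. Then the 4^N matrices {i·P_μ : μ : Fin N → Fin 4} form a basis of the real vector space of skew-Hermitian 2^N × 2^N complex matrices, and the 4^N − 1 matrices {i·P_μ : μ not identically 0} form a basis of the real vector space su(2^N) of traceless skew-Hermitian 2^N × 2^N complex matrices. -/
open Matrix

/-- The four Pauli matrices `σ₀, σ₁, σ₂, σ₃`. -/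
def pauli : Fin 4 → Matrix (Fin 2) (Fin 2) ℂ :=
  ![!![1, 0; 0, 1], !![0, 1; 1, 0], !![0, -Complex.I; Complex.I, 0], !![1, 0; 0, -1]]

/-- The Pauli string associated to `μ : Fin N → Fin 4`: the matrix indexed by
`Fin N → Fin 2` with entries `(P_μ)_{x,y} = ∏ j, (σ_{μ j})_{x j, y j}`. -/
def pauliString {N : ℕ} (μ : Fin N → Fin 4) :
    Matrix (Fin N → Fin 2) (Fin N → Fin 2) ℂ :=
  Matrix.of fun x y => ∏ j, pauli (μ j) (x j) (y j)

theorem pauli_orth (a b : Fin 4) :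
    ∑ x, ∑ y, pauli a x y * pauli b y x = if a = b then 2 else 0 := by
  fin_cases a <;> fin_cases b <;> simp [pauli, Fin.sum_univ_two] <;> norm_num

theorem pauli_compl (x y z w : Fin 2) :
    ∑ a, pauli a x y * pauli a z w = if x = w ∧ y = z then 2 else 0 := by
  fin_cases x <;> fin_cases y <;> fin_cases z <;> fin_cases w <;>
    simp [pauli, Fin.sum_univ_four] <;> norm_num

theorem pauli_star (a : Fin 4) (x y : Fin 2) : star (pauli a y x) = pauli a x y := by
  fin_cases a <;> fin_cases x <;> fin_cases y <;> simp [pauli]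

theorem pauliString_herm {N : ℕ} (μ : Fin N → Fin 4) : (pauliString μ)ᴴ = pauliString μ := by
  ext x y
  simp only [pauliString, conjTranspose_apply, of_apply, star_prod, pauli_star]

theorem pauliString_zero {N : ℕ} : pauliString (fun _ : Fin N => (0 : Fin 4)) = 1 := by
  have h : ∀ x y : Fin 2, pauli 0 x y = if x = y then 1 else 0 := by
    intro x y
    fin_cases x <;> fin_cases y <;> simp [pauli]
  ext x y
  simp only [pauliString, of_apply, h, Matrix.one_apply, Finset.prod_ite_zero]
  simp [funext_iff]

theorem pauliString_orth {N : ℕ} (μ ν : Fin N → Fin 4) :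
    (pauliString μ * pauliString ν).trace = if μ = ν then 2 ^ N else 0 := by
  have h : (pauliString μ * pauliString ν).trace =
      ∏ j, ∑ x, ∑ y, pauli (μ j) x y * pauli (ν j) y x := by
    simp only [Matrix.trace, diag_apply, Matrix.mul_apply, pauliString, of_apply,
      ← Finset.prod_mul_distrib, Fintype.prod_sum]
  rw [h]
  simp only [pauli_orth, Finset.prod_ite_zero]
  simp [funext_iff]

theorem pauliString_compl {N : ℕ} (x y z w : Fin N → Fin 2) :
    ∑ μ, pauliString μ x y * pauliString μ z w = if x = w ∧ y = z then 2 ^ N else 0 := by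
  simp only [pauliString, of_apply, ← Finset.prod_mul_distrib]
  rw [← Fintype.prod_sum (fun j a => pauli a (x j) (y j) * pauli a (z j) (w j))]
  simp only [pauli_compl, Finset.prod_ite_zero]
  simp [funext_iff, forall_and]

theorem pauliString_expand {N : ℕ} (a : Matrix (Fin N → Fin 2) (Fin N → Fin 2) ℂ) :
    ∑ μ, (pauliString μ * a).trace • pauliString μ = (2 ^ N : ℂ) • a := by
  ext x y
  simp only [Matrix.sum_apply, Matrix.smul_apply, smul_eq_mul, Matrix.trace, diag_apply,
    Matrix.mul_apply, Finset.sum_mul]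
  rw [Finset.sum_comm]
  have : ∀ z, ∑ μ, ∑ w, pauliString μ z w * a w z * pauliString μ x y =
      ∑ w, if z = y ∧ w = x then 2 ^ N * a x y else 0 := by
    intro z
    rw [Finset.sum_comm]
    refine Finset.sum_congr rfl fun w _ => ?_
    have h := pauliString_compl z w x y
    calc _ = (∑ μ, pauliString μ z w * pauliString μ x y) * a w z := by
          rw [Finset.sum_mul]
          exact Finset.sum_congr rfl fun μ _ => by ring
      _ = _ := by
          rw [h]
          split_ifs with hc
          · rw [hc.1, hc.2]
          · simp
  simp only [this, ite_and]
  simp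

theorem skew_re {N : ℕ} (a : Matrix (Fin N → Fin 2) (Fin N → Fin 2) ℂ) (ha : aᴴ = -a)
    (μ : Fin N → Fin 4) :
    (pauliString μ * a).trace = ((pauliString μ * a).trace.im : ℂ) * Complex.I := by
  have h : star (pauliString μ * a).trace = -(pauliString μ * a).trace := by
    rw [← Matrix.trace_conjTranspose, conjTranspose_mul, ha, pauliString_herm, Matrix.neg_mul,
      Matrix.trace_neg, Matrix.trace_mul_comm]
  have h1 := congrArg Complex.re h
  simp at h1
  apply Complex.ext
  · simp
    linarith
  · simp

theorem skew_expand {N : ℕ} (a : Matrix (Fin N → Fin 2) (Fin N → Fin 2) ℂ) (ha : aᴴ = -a) :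
    a = ∑ μ, (((2 : ℝ) ^ N)⁻¹ * (pauliString μ * a).trace.im) • (Complex.I • pauliString μ) := by
  have h := pauliString_expand a
  have h2 : (2 ^ N : ℂ) ≠ 0 := pow_ne_zero N two_ne_zero
  have : a = (2 ^ N : ℂ)⁻¹ • ((2 ^ N : ℂ) • a) := by rw [smul_smul, inv_mul_cancel₀ h2, one_smul]
  rw [← h, Finset.smul_sum] at this
  refine this.trans (Finset.sum_congr rfl fun μ _ => ?_)
  rw [skew_re a ha μ]
  ext x y
  simp
  ring

theorem skew_I {N : ℕ} (μ : Fin N → Fin 4) :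
    (Complex.I • pauliString μ)ᴴ = -(Complex.I • pauliString μ) := by
  simp [conjTranspose_smul, pauliString_herm]

theorem pauliString_li (N : ℕ) :
    LinearIndependent ℝ fun μ : Fin N → Fin 4 => Complex.I • pauliString μ := by
  rw [Fintype.linearIndependent_iff]
  intro g hg ν
  have h := congrArg (fun m => (pauliString ν * m).trace) hg
  simp only [Matrix.mul_sum, Matrix.trace_sum, Matrix.mul_smul, Matrix.trace_smul,
    pauliString_orth] at h
  simpa using h

/-- For `N ≥ 1`, the `4^N` matrices `i·P_μ` (for `μ : Fin N → Fin 4`) form an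
`ℝ`-basis of the real vector space of skew-Hermitian `2^N × 2^N` matrices, and the `4^N − 1`
matrices `i·P_μ` with `μ` not identically `0` form an `ℝ`-basis of the real vector space
`su(2^N)` of traceless skew-Hermitian matrices. -/
theorem pauliStrings_basis (N : ℕ) (hN : 1 ≤ N) :
    (LinearIndependent ℝ fun μ : Fin N → Fin 4 => Complex.I • pauliString μ) ∧
    ((Submodule.span ℝ
        (Set.range fun μ : Fin N → Fin 4 => Complex.I • pauliString μ) : Set _) =
      {a : Matrix (Fin N → Fin 2) (Fin N → Fin 2) ℂ | aᴴ = -a}) ∧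
    (LinearIndependent ℝ
      fun μ : {μ : Fin N → Fin 4 // μ ≠ fun _ => 0} => Complex.I • pauliString μ.1) ∧
    ((Submodule.span ℝ
        (Set.range fun μ : {μ : Fin N → Fin 4 // μ ≠ fun _ => 0} =>
          Complex.I • pauliString μ.1) : Set _) =
      {a : Matrix (Fin N → Fin 2) (Fin N → Fin 2) ℂ | aᴴ = -a ∧ a.trace = 0}) := by
  refine ⟨pauliString_li N, ?_, (pauliString_li N).comp _ Subtype.val_injective, ?_⟩
  · ext a
    constructor
    · intro h
      refine Submodule.span_induction (p := fun a _ => aᴴ = -a) ?_ ?_ ?_ ?_ h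
      · rintro _ ⟨μ, rfl⟩
        exact skew_I μ
      · simp
      · intro x y _ _ hx hy
        rw [conjTranspose_add, hx, hy, neg_add]
      · intro c x _ hx
        rw [conjTranspose_smul, hx]
        simp
    · intro ha
      rw [skew_expand a ha]
      exact Submodule.sum_mem _ fun μ _ => Submodule.smul_mem _ _ (Submodule.subset_span ⟨μ, rfl⟩)
  · ext a
    constructor
    · intro h
      refine Submodule.span_induction (p := fun a _ => aᴴ = -a ∧ a.trace = 0) ?_ ?_ ?_ ?_ h
      · rintro _ ⟨μ, rfl⟩
        refine ⟨skew_I μ.1, ?_⟩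
        have h := pauliString_orth μ.1 (fun _ => 0)
        rw [if_neg μ.2, pauliString_zero, mul_one] at h
        rw [Matrix.trace_smul, h, smul_zero]
      · simp
      · intro x y _ _ hx hy
        rw [conjTranspose_add, hx.1, hy.1, neg_add, Matrix.trace_add, hx.2, hy.2]
        simp
      · intro c x _ hx
        rw [conjTranspose_smul, hx.1, Matrix.trace_smul, hx.2]
        simp
    · rintro ⟨ha, ht⟩
      rw [skew_expand a ha]
      refine Submodule.sum_mem _ fun μ _ => ?_
      by_cases hμ : μ = fun _ => 0
      · subst hμ
        rw [pauliString_zero, one_mul, ht]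
        simp
      · exact Submodule.smul_mem _ _ (Submodule.subset_span ⟨⟨μ, hμ⟩, rfl⟩)
end

section
/- Let N ≥ 1 and let G be a subgroup of the permutation group of Fin N. Let Gsu(2^N) be the real vector space of 2^N × 2^N complex matrices a that are skew-Hermitian, traceless, and satisfy U_α a U_α⁻¹ = a for all α ∈ G. Then the real dimension of Gsu(2^N) equals the number of orbits of the action of G on the set of functions (Fin N → Fin 4) given by α • μ = μ ∘ α⁻¹, minus one. -/
open Matrix

theorem qpm_mul_apply {N : ℕ} (α : Equiv.Perm (Fin N))
    (a : Matrix (Fin N → Fin 2) (Fin N → Fin 2) ℂ) (x y : Fin N → Fin 2) :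
    (qubitPermMatrix α * a) x y = a (x ∘ α) y := by
  simp [Matrix.mul_apply, qubitPermMatrix]

theorem mul_qpm_apply {N : ℕ} (α : Equiv.Perm (Fin N))
    (a : Matrix (Fin N → Fin 2) (Fin N → Fin 2) ℂ) (x y : Fin N → Fin 2) :
    (a * qubitPermMatrix α) x (y ∘ α) = a x y := by
  have h : ∀ z : Fin N → Fin 2, (y ∘ α = z ∘ α) ↔ y = z := fun z =>
    α.surjective.injective_comp_right.eq_iff
  simp [Matrix.mul_apply, qubitPermMatrix, h]

theorem qpm_mul_inv {N : ℕ} (α : Equiv.Perm (Fin N)) :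
    qubitPermMatrix α * qubitPermMatrix α⁻¹ = 1 := by
  ext x y
  rw [qpm_mul_apply]
  have : (x ∘ α) ∘ (α⁻¹ : Equiv.Perm (Fin N)) = x := by
    ext i; simp
  change (if y = (x ∘ α) ∘ (α⁻¹ : Equiv.Perm (Fin N)) then (1 : ℂ) else 0) = _
  rw [this, Matrix.one_apply]
  simp only [eq_comm]

theorem qpm_conj_iff {N : ℕ} (α : Equiv.Perm (Fin N))
    (a : Matrix (Fin N → Fin 2) (Fin N → Fin 2) ℂ) :
    qubitPermMatrix α * a * (qubitPermMatrix α)⁻¹ = a ↔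
      ∀ x y, a (x ∘ α) (y ∘ α) = a x y := by
  have h1 := qpm_mul_inv α
  have h2 : qubitPermMatrix α⁻¹ * qubitPermMatrix α = 1 := mul_eq_one_comm.mp h1
  rw [Matrix.inv_eq_right_inv h1]
  have h3 : qubitPermMatrix α * a * qubitPermMatrix α⁻¹ = a ↔
      qubitPermMatrix α * a = a * qubitPermMatrix α := by
    constructor
    · intro h
      calc _ = qubitPermMatrix α * a * (qubitPermMatrix α⁻¹ * qubitPermMatrix α) := by
            rw [h2, Matrix.mul_one]
        _ = _ := by rw [← Matrix.mul_assoc, h]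
    · intro h
      rw [h, Matrix.mul_assoc, h1, Matrix.mul_one]
  rw [h3]
  constructor
  · intro h x y
    rw [← qpm_mul_apply α a, h, mul_qpm_apply]
  · intro h
    ext x y
    obtain ⟨z, rfl⟩ : ∃ z, y = z ∘ α := ⟨y ∘ α.symm, by ext i; simp⟩
    rw [qpm_mul_apply, mul_qpm_apply, h]

/-- pair of bit strings as a base 4 string -/
def pr4 {N : ℕ} (x y : Fin N → Fin 2) : Fin N → Fin 4 :=
  fun i => (finProdFinEquiv (x i, y i) : Fin (2 * 2))

def fst4 {N : ℕ} (μ : Fin N → Fin 4) : Fin N → Fin 2 :=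
  fun i => ((finProdFinEquiv (m := 2) (n := 2)).symm (μ i)).1

def snd4 {N : ℕ} (μ : Fin N → Fin 4) : Fin N → Fin 2 :=
  fun i => ((finProdFinEquiv (m := 2) (n := 2)).symm (μ i)).2

theorem fst4_pr4 {N : ℕ} (x y : Fin N → Fin 2) : fst4 (pr4 x y) = x := by
  funext i
  exact congrArg Prod.fst ((finProdFinEquiv (m := 2) (n := 2)).symm_apply_apply (x i, y i))

theorem snd4_pr4 {N : ℕ} (x y : Fin N → Fin 2) : snd4 (pr4 x y) = y := by
  funext i
  exact congrArg Prod.snd ((finProdFinEquiv (m := 2) (n := 2)).symm_apply_apply (x i, y i))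

theorem pr4_fst_snd {N : ℕ} (μ : Fin N → Fin 4) : pr4 (fst4 μ) (snd4 μ) = μ := by
  funext i
  exact (finProdFinEquiv (m := 2) (n := 2)).apply_symm_apply (μ i)

/-- real functions on a quotient to matrices -/
noncomputable def toMat {N : ℕ} (r : (Fin N → Fin 4) → (Fin N → Fin 4) → Prop) :
    (Quot r → ℝ) →ₗ[ℝ] Matrix (Fin N → Fin 2) (Fin N → Fin 2) ℂ where
  toFun g := Matrix.of fun x y =>
    ⟨(g (Quot.mk r (pr4 x y)) - g (Quot.mk r (pr4 y x))) / 2,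
     (g (Quot.mk r (pr4 x y)) + g (Quot.mk r (pr4 y x))) / 2⟩
  map_add' f g := by
    ext x y
    apply Complex.ext <;> simp <;> ring
  map_smul' c g := by
    ext x y
    apply Complex.ext <;> simp <;> ring

theorem toMat_re {N : ℕ} (r : (Fin N → Fin 4) → (Fin N → Fin 4) → Prop) (g x y) :
    (toMat r g x y).re = (g (Quot.mk r (pr4 x y)) - g (Quot.mk r (pr4 y x))) / 2 := rfl

theorem toMat_im {N : ℕ} (r : (Fin N → Fin 4) → (Fin N → Fin 4) → Prop) (g x y) :
    (toMat r g x y).im = (g (Quot.mk r (pr4 x y)) + g (Quot.mk r (pr4 y x))) / 2 := rfl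

theorem toMat_inj {N : ℕ} (r : (Fin N → Fin 4) → (Fin N → Fin 4) → Prop) :
    Function.Injective (toMat r) := by
  intro f g h
  funext q
  induction q using Quot.ind with
  | mk μ =>
    have h1 := congrArg (fun m => (m (fst4 μ) (snd4 μ)).re) h
    have h2 := congrArg (fun m => (m (fst4 μ) (snd4 μ)).im) h
    simp only [toMat_re, toMat_im, pr4_fst_snd] at h1 h2
    linarith

/-- trace functional -/
noncomputable def trF {N : ℕ} (r : (Fin N → Fin 4) → (Fin N → Fin 4) → Prop) :
    (Quot r → ℝ) →ₗ[ℝ] ℝ where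
  toFun g := ∑ x : Fin N → Fin 2, g (Quot.mk r (pr4 x x))
  map_add' f g := by simp [Finset.sum_add_distrib]
  map_smul' c g := by simp [Finset.mul_sum]

theorem trF_surj {N : ℕ} (r : (Fin N → Fin 4) → (Fin N → Fin 4) → Prop) :
    Function.Surjective (trF r) := by
  intro c
  refine ⟨fun _ => c / 2 ^ N, ?_⟩
  simp [trF]
  field_simp

theorem finrank_ker_trF {N : ℕ} (r : (Fin N → Fin 4) → (Fin N → Fin 4) → Prop) :
    Module.finrank ℝ (LinearMap.ker (trF r)) = Nat.card (Quot r) - 1 := by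
  classical
  haveI : Finite (Quot r) := Quot.finite r
  haveI := Fintype.ofFinite (Quot r)
  have h := LinearMap.finrank_range_add_finrank_ker (trF r)
  rw [LinearMap.range_eq_top.mpr (trF_surj r), finrank_top, Module.finrank_self,
    Module.finrank_fintype_fun_eq_card, ← Nat.card_eq_fintype_card] at h
  omega

theorem toMat_trace {N : ℕ} (r : (Fin N → Fin 4) → (Fin N → Fin 4) → Prop) (g) :
    (toMat r g).trace = 0 ↔ trF r g = 0 := by
  have hre : (toMat r g).trace.re = 0 := by
    simp [Matrix.trace, toMat_re]
  have him : (toMat r g).trace.im = trF r g := by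
    simp [Matrix.trace, toMat_im, trF]
  rw [Complex.ext_iff, hre, him]
  simp

theorem finrank_Gsu_eq_orbits (N : ℕ) (hN : 1 ≤ N) (G : Subgroup (Equiv.Perm (Fin N)))
    (V : Submodule ℝ (Matrix (Fin N → Fin 2) (Fin N → Fin 2) ℂ))
    (hV : ∀ a, a ∈ V ↔ aᴴ = -a ∧ a.trace = 0 ∧
      ∀ α ∈ G, qubitPermMatrix α * a * (qubitPermMatrix α)⁻¹ = a) :
    Module.finrank ℝ V =
      Nat.card (Quot fun μ ν : Fin N → Fin 4 =>
        ∃ α ∈ G, ν = μ ∘ ⇑(α⁻¹ : Equiv.Perm (Fin N))) - 1 := by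
  set r : (Fin N → Fin 4) → (Fin N → Fin 4) → Prop := fun μ ν =>
        ∃ α ∈ G, ν = μ ∘ ⇑(α⁻¹ : Equiv.Perm (Fin N)) with hr
  suffices h : V = (LinearMap.ker (trF r)).map (toMat r) by
    rw [h, ← finrank_ker_trF]
    exact (LinearEquiv.finrank_eq
      (Submodule.equivMapOfInjective (toMat r) (toMat_inj r) _)).symm
  ext a
  rw [hV, Submodule.mem_map]
  constructor
  · rintro ⟨h1, h2, h3⟩
    have hs : ∀ x y, (a y x).re = -(a x y).re ∧ (a y x).im = (a x y).im := by
      intro x y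
      have := congrFun (congrFun h1 x) y
      have e1 := congrArg Complex.re this
      have e2 := congrArg Complex.im this
      simp [Matrix.conjTranspose_apply] at e1 e2
      exact ⟨e1, e2⟩
    let g : Quot r → ℝ := Quot.lift
      (fun μ => (a (fst4 μ) (snd4 μ)).re + (a (fst4 μ) (snd4 μ)).im) (by
        rintro μ ν ⟨α, hα, rfl⟩
        have := (qpm_conj_iff _ _).1 (h3 α⁻¹ (G.inv_mem hα)) (fst4 μ) (snd4 μ)
        change _ = (a (fst4 μ ∘ (α⁻¹ : Equiv.Perm (Fin N)))
          (snd4 μ ∘ (α⁻¹ : Equiv.Perm (Fin N)))).re + (a (fst4 μ ∘ (α⁻¹ : Equiv.Perm (Fin N)))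
          (snd4 μ ∘ (α⁻¹ : Equiv.Perm (Fin N)))).im
        rw [this])
    have hg : ∀ x y, g (Quot.mk r (pr4 x y)) = (a x y).re + (a x y).im := by
      intro x y
      change (a (fst4 (pr4 x y)) (snd4 (pr4 x y))).re + (a (fst4 (pr4 x y)) (snd4 (pr4 x y))).im = _
      rw [fst4_pr4, snd4_pr4]
    have hga : toMat r g = a := by
      ext x y
      obtain ⟨e1, e2⟩ := hs x y
      apply Complex.ext
      · rw [toMat_re, hg, hg, e1, e2]; ring
      · rw [toMat_im, hg, hg, e1, e2]; ring
    refine ⟨g, ?_, hga⟩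
    rw [LinearMap.mem_ker, ← toMat_trace, hga, h2]
  · rintro ⟨g, hg, rfl⟩
    refine ⟨?_, (toMat_trace r g).2 hg, ?_⟩
    · ext x y
      apply Complex.ext
      · simp only [Matrix.conjTranspose_apply, Matrix.neg_apply, Complex.neg_re,
          Complex.star_def, Complex.conj_re, toMat_re]
        ring
      · simp only [Matrix.conjTranspose_apply, Matrix.neg_apply, Complex.neg_im,
          Complex.star_def, Complex.conj_im, toMat_im]
        ring
    · intro α hα
      rw [qpm_conj_iff]
      have key : ∀ x y : Fin N → Fin 2,
          Quot.mk r (pr4 (x ∘ α) (y ∘ α)) = Quot.mk r (pr4 x y) := by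
        intro x y
        refine (Quot.sound ⟨α⁻¹, G.inv_mem hα, ?_⟩).symm
        rw [inv_inv]
        rfl
      intro x y
      apply Complex.ext
      · rw [toMat_re, toMat_re, key, key]
      · rw [toMat_im, toMat_im, key, key]
end

section
/- Let N ≥ 1 and let C_N be the cyclic subgroup of the permutation group of Fin N generated by the N-cycle i ↦ i+1 (mod N). Then the real dimension of C_N su(2^N), the real vector space of 2^N × 2^N complex matrices a that are skew-Hermitian, traceless, and satisfy U_α a U_α⁻¹ = a for all α ∈ C_N, equals (1/N) · Σ_{d ∣ N} φ(d) · 4^{N/d} − 1, where φ is Euler's totient function and the sum runs over the positive divisors d of N. -/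
open Matrix

theorem aux_fix {G A : Type*} [Group G] [Fintype G] [Fintype A]
    (mc : ∀ a b : G, a * b = b * a) (h : G) :
    Nat.card {f : G → A // ∀ g, f (h * g) = f g} =
      Fintype.card A ^ (Fintype.card G / orderOf h) := by
  have e : {f : G → A // ∀ g, f (h * g) = f g} ≃ (G ⧸ Subgroup.zpowers h → A) :=
    { toFun := fun f q => Quotient.liftOn' q f.1 (by
        intro a b hab
        rw [QuotientGroup.leftRel_apply, Subgroup.mem_zpowers_iff] at hab
        obtain ⟨k, hk⟩ := hab
        have hb : b = h ^ k * a := by rw [hk]; rw [mc]; simp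
        rw [hb]
        clear hk hb
        induction k using Int.induction_on with
        | zero => simp
        | succ i ih => rw [ih, add_comm, _root_.zpow_add, zpow_one, mul_assoc, f.2]
        | pred i ih =>
          rw [ih, ← f.2 (h ^ (-(i : ℤ) - 1) * a), ← mul_assoc, ← _root_.zpow_one_add]
          rw [show (1 : ℤ) + (-(i : ℤ) - 1) = -(i : ℤ) by ring])
      invFun := fun F => ⟨fun g => F (g : G ⧸ Subgroup.zpowers h), fun g => by
        refine congrArg F ?_
        rw [eq_comm, QuotientGroup.eq]
        simp [mc h g]⟩
      left_inv := fun f => by ext g; rfl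
      right_inv := fun F => by
        ext q
        induction q using Quotient.inductionOn'
        rfl }
  rw [Nat.card_congr e, Nat.card_fun, Nat.card_eq_fintype_card (α := A)]
  congr 1
  rw [← Nat.card_eq_fintype_card (α := G), (Subgroup.zpowers h).card_eq_card_quotient_mul_card_subgroup,
    Nat.card_zpowers, Nat.mul_div_cancel _ (orderOf_pos h)]

open Fin.NatCast Fin.CommRing in
theorem rot_pow (n k : ℕ) (i : Fin (n + 1)) :
    ((finRotate (n + 1)) ^ k) i = i + (k : Fin (n + 1)) := by
  induction k with
  | zero => simp
  | succ k ih => rw [pow_succ', Equiv.Perm.mul_apply, ih, finRotate_apply]; push_cast; ring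

open Fin.NatCast Fin.CommRing in
theorem rot_bij (n : ℕ) : Function.Bijective
    (fun g : Subgroup.zpowers (finRotate (n + 1)) => (g : Equiv.Perm (Fin (n + 1))) 0) := by
  constructor
  · intro g h hgh
    ext1
    ext1 i
    have hi : i = ((finRotate (n + 1)) ^ (i : ℕ)) 0 := by rw [rot_pow]; simp
    have hc : ∀ g : Subgroup.zpowers (finRotate (n + 1)), (g : Equiv.Perm (Fin (n + 1))) i
        = ((finRotate (n + 1)) ^ (i : ℕ)) ((g : Equiv.Perm (Fin (n + 1))) 0) := by
      rintro ⟨g, k, rfl⟩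
      conv_lhs => rw [hi]
      simp only [← Equiv.Perm.mul_apply]
      rw [← zpow_natCast, ← _root_.zpow_add, ← _root_.zpow_add, add_comm k]
    rw [hc g, hc h]
    exact congrArg _ hgh
  · intro i
    exact ⟨⟨_, (i : ℕ), rfl⟩, by simp [rot_pow]⟩

attribute [local instance] arrowAction

theorem orbit_count (n : ℕ)
    (K : ℕ) (hK : K = Nat.card (Quotient (MulAction.orbitRel (Subgroup.zpowers (finRotate (n + 1)))
      ((Fin (n + 1) → Fin 2) × (Fin (n + 1) → Fin 2))))) :
    K * (n + 1) = ∑ d ∈ (n + 1).divisors, Nat.totient d * 4 ^ ((n + 1) / d) := by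
  classical
  let G := Subgroup.zpowers (finRotate (n + 1))
  let P := (Fin (n + 1) → Fin 2) × (Fin (n + 1) → Fin 2)
  have mc : ∀ a b : G, a * b = b * a := by
    rintro ⟨_, i, rfl⟩ ⟨_, j, rfl⟩
    exact Subtype.ext (zpow_mul_comm _ i j)
  let e : G ≃ Fin (n + 1) := Equiv.ofBijective _ (rot_bij n)
  have hcard : Fintype.card G = n + 1 := by rw [Fintype.card_congr e, Fintype.card_fin]
  have hB := MulAction.sum_card_fixedBy_eq_card_orbits_mul_card_group G P
  have hfix : ∀ g : G, Fintype.card (MulAction.fixedBy P g) = 4 ^ ((n + 1) / orderOf g) := by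
    intro g
    have := aux_fix (A := Fin 2 × Fin 2) mc g⁻¹
    rw [hcard, orderOf_inv, Fintype.card_prod, Fintype.card_fin] at this
    rw [← this, ← Nat.card_eq_fintype_card]
    apply Nat.card_congr
    refine Equiv.subtypeEquiv
      ((Equiv.arrowProdEquivProdArrow (Fin (n+1)) (fun _ => Fin 2) (fun _ => Fin 2)).symm.trans
        (e.symm.arrowCongr (Equiv.refl _))) ?_
    rintro ⟨x, y⟩
    rw [MulAction.mem_fixedBy, Prod.ext_iff, funext_iff, funext_iff]
    rw [← forall_and, ← e.forall_congr_right]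
    refine forall_congr' fun h => ?_
    simp only [Equiv.trans_apply, Equiv.arrowCongr_apply, Function.comp, Prod.ext_iff]
    rfl
  rw [Finset.sum_congr rfl (fun g _ => hfix g)] at hB
  rw [hcard, ← Nat.card_eq_fintype_card] at hB
  rw [hK]
  refine hB.symm.trans ?_
  rw [← Finset.sum_fiberwise_of_maps_to (g := fun g : G => orderOf g) (t := (n+1).divisors)]
  · refine Finset.sum_congr rfl fun d hd => ?_
    rw [Finset.sum_congr rfl (g := fun _ => 4 ^ ((n + 1) / d))]
    · rw [Finset.sum_const, smul_eq_mul]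
      congr 1
      exact IsCyclic.card_orderOf_eq_totient (by rw [hcard]; exact Nat.dvd_of_mem_divisors hd)
    · intro g hg
      rw [(Finset.mem_filter.1 hg).2]
  · intro g _
    rw [Nat.mem_divisors]
    have hd := orderOf_dvd_card (x := g)
    rw [hcard] at hd
    exact ⟨hd, Nat.succ_ne_zero n⟩

theorem inv_iff {I : Type*} [DecidableEq I] [Fintype I] (α : Equiv.Perm I)
    (a : Matrix (I → Fin 2) (I → Fin 2) ℂ) :
    qubitPermMatrix α * a * (qubitPermMatrix α)⁻¹ = a ↔
      ∀ x y, a (x ∘ α) (y ∘ α) = a x y := by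
  have key : ∀ (β : Equiv.Perm I) (b : Matrix (I → Fin 2) (I → Fin 2) ℂ) x y,
      (qubitPermMatrix β * b) x y = b (x ∘ β) y := by
    intro β b x y
    simp [Matrix.mul_apply, qubitPermMatrix]
  have key2 : ∀ (b : Matrix (I → Fin 2) (I → Fin 2) ℂ) x y,
      (b * qubitPermMatrix α⁻¹) x y = b x (y ∘ α) := by
    intro b x y
    rw [Matrix.mul_apply, Finset.sum_eq_single (y ∘ α)]
    · simp [qubitPermMatrix, Function.comp_assoc]
    · intro z _ hz
      have : ¬ (y = z ∘ ⇑α⁻¹) := by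
        rintro rfl
        apply hz; ext i; simp
      simp only [qubitPermMatrix, Matrix.of_apply, if_neg this, mul_zero]
    · simp
  have hinv : (qubitPermMatrix α)⁻¹ = qubitPermMatrix α⁻¹ := by
    apply Matrix.inv_eq_right_inv
    ext x y
    rw [key2, Matrix.one_apply]
    simp only [qubitPermMatrix, Matrix.of_apply]
    congr 1
    rw [eq_iff_iff]
    exact ⟨fun h => (α.surjective.injective_comp_right h).symm, fun h => by rw [h]⟩
  rw [hinv, ← Matrix.ext_iff]
  simp only [key2, key]

/-- For `N ≥ 1`, let `C_N` be the cyclic subgroup of `Equiv.Perm (Fin N)`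
generated by the `N`-cycle `i ↦ i + 1 (mod N)` (i.e. `finRotate N`).  The real dimension of
`C_N su(2^N)` equals `(1/N) · Σ_{d ∣ N} φ(d) · 4^{N/d} − 1`. -/
theorem finrank_CNsu (N : ℕ) (hN : 1 ≤ N)
    (V : Submodule ℝ (Matrix (Fin N → Fin 2) (Fin N → Fin 2) ℂ))
    (hV : ∀ a, a ∈ V ↔ aᴴ = -a ∧ a.trace = 0 ∧
      ∀ α ∈ Subgroup.zpowers (finRotate N),
        qubitPermMatrix α * a * (qubitPermMatrix α)⁻¹ = a) :
    (Module.finrank ℝ V : ℚ) =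
      (1 / N) * ∑ d ∈ N.divisors, (Nat.totient d : ℚ) * 4 ^ (N / d) - 1 := by
  classical
  obtain ⟨n, rfl⟩ : ∃ n, N = n + 1 := ⟨N - 1, by omega⟩
  simp only [inv_iff] at hV
  let X := Fin (n + 1) → Fin 2
  let G := Subgroup.zpowers (finRotate (n + 1))
  let Ω := Quotient (MulAction.orbitRel G (X × X))
  haveI : Fintype Ω := Fintype.ofFinite _
  let q : X → X → Ω := fun x y => Quotient.mk _ (x, y)
  have hq : ∀ x y x' y', q x y = q x' y' → q y x = q y' x' := by
    intro x y x' y' h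
    obtain ⟨g, hg⟩ := Quotient.exact h
    apply Quotient.sound
    exact ⟨g, Prod.ext (congrArg Prod.snd hg) (congrArg Prod.fst hg)⟩
  have hqα : ∀ α ∈ G, ∀ x y : X, q (x ∘ α) (y ∘ α) = q x y := by
    intro α hα x y
    apply Quotient.sound
    refine ⟨⟨α, hα⟩⁻¹, ?_⟩
    refine Prod.ext ?_ ?_ <;> ext i <;> simp [arrowAction] <;> rfl
  let T : (Ω → ℝ) →ₗ[ℝ] ℝ := ∑ x : X, LinearMap.proj (q x x)
  have hT : ∀ c, T c = ∑ x : X, c (q x x) := by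
    intro c; simp [T, LinearMap.sum_apply]
  have hT0 : T ≠ 0 := by
    intro h
    have := hT (fun _ => 1)
    rw [h] at this
    simp [X] at this
    exact absurd this.symm (by positivity)
  let L : LinearMap.ker T ≃ₗ[ℝ] V :=
    { toFun := fun c => ⟨Matrix.of fun x y =>
          (⟨(c.1 (q x y) - c.1 (q y x)) / 2, (c.1 (q x y) + c.1 (q y x)) / 2⟩ : ℂ), by
        rw [hV]
        refine ⟨?_, ?_, ?_⟩
        · ext x y
          apply Complex.ext <;> simp <;> ring
        · have := c.2
          rw [LinearMap.mem_ker, hT] at this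
          apply Complex.ext
          · simp [Matrix.trace]
          · simpa [Matrix.trace] using this
        · intro α hα x y
          simp only [Matrix.of_apply]
          rw [hqα α hα, hqα α hα]⟩
      map_add' := by
        intro c d
        ext x y
        apply Complex.ext <;> simp <;> ring
      map_smul' := by
        intro r c
        ext x y
        apply Complex.ext <;> simp <;> ring
      invFun := fun a => ⟨fun w => Quotient.liftOn w
          (fun p => (a.1 p.1 p.2).re + (a.1 p.1 p.2).im) (by
            rintro p p' ⟨g, rfl⟩
            have := ((hV a.1).1 a.2).2.2 (g⁻¹ : G).1 (g⁻¹ : G).2 p'.1 p'.2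
            have h2 : a.1 (g • p').1 (g • p').2 = a.1 p'.1 p'.2 := this
            show (a.1 (g • p').1 (g • p').2).re + (a.1 (g • p').1 (g • p').2).im = _
            rw [h2]), by
          rw [LinearMap.mem_ker, hT]
          obtain ⟨h1, h2, h3⟩ := (hV a.1).1 a.2
          have hre : ∀ x, (a.1 x x).re = 0 := by
            intro x
            have := congrArg Complex.re (congrFun (congrFun h1 x) x)
            simp at this
            linarith
          have him := congrArg Complex.im h2
          simp only [Matrix.trace, Matrix.diag, Complex.im_sum, Complex.zero_im] at him
          rw [← him]
          refine Finset.sum_congr rfl fun x _ => ?_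
          show (a.1 x x).re + (a.1 x x).im = _
          rw [hre, zero_add]⟩
      left_inv := by
        intro c
        ext w
        induction w using Quotient.inductionOn with
        | h p =>
          show (c.1 (q p.1 p.2) - c.1 (q p.2 p.1)) / 2 + (c.1 (q p.1 p.2) + c.1 (q p.2 p.1)) / 2
            = c.1 (q p.1 p.2)
          ring
      right_inv := by
        intro a
        obtain ⟨h1, h2, h3⟩ := (hV a.1).1 a.2
        ext x y
        have hre := congrArg Complex.re (congrFun (congrFun h1 x) y)
        have him := congrArg Complex.im (congrFun (congrFun h1 x) y)
        simp at hre him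
        apply Complex.ext
        · show (((a.1 x y).re + (a.1 x y).im) - ((a.1 y x).re + (a.1 y x).im)) / 2 = (a.1 x y).re
          linarith
        · show (((a.1 x y).re + (a.1 x y).im) + ((a.1 y x).re + (a.1 y x).im)) / 2 = (a.1 x y).im
          linarith }
  have hr := Module.Dual.finrank_ker_add_one_of_ne_zero (f := T) hT0
  rw [L.finrank_eq, Module.finrank_fintype_fun_eq_card] at hr
  have hc := orbit_count n (Fintype.card Ω) (Nat.card_eq_fintype_card).symm
  rw [← hr] at hc
  have hc' := congrArg (Nat.cast : ℕ → ℚ) hc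
  push_cast at hc' ⊢
  rw [← hc']
  have : (n : ℚ) + 1 ≠ 0 := by positivity
  field_simp
  ring
end

section
/- Let n ≥ 1 and let A ∈ SU(n) be unitarily diagonalized as A = P·D·Pᴴ with P unitary and D = diag(e^{iθ_1},…,e^{iθ_n}) with all θ_j ∈ [0, 2π). Suppose θ_1 + … + θ_n = 2πk for some k ∈ {0, 1, …, n−1}. Then there is a continuous path γ : [0,1] → SU(n) with γ(0) = e^{2πik/n}·1 (the scalar matrix) and γ(1) = A; explicitly, γ(t) = P · diag(e^{i(tθ_1 + (1−t)·2πk/n)}, …, e^{i(tθ_n + (1−t)·2πk/n)}) · Pᴴ lies in SU(n) for all t ∈ [0,1]. -/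
open Matrix

/-- Let `A ∈ SU(n)` be unitarily diagonalized as `A = P D Pᴴ` with
`D = diag(e^{iθ_1},…,e^{iθ_n})`, all `θ_j ∈ [0, 2π)`, and `Σ θ_j = 2πk` for some
`0 ≤ k < n`.  Then `γ(t) = P · diag(e^{i(tθ_j + (1−t)·2πk/n)})_j · Pᴴ` is a continuous path
in `SU(n)` from the scalar matrix `e^{2πik/n}·1` to `A`. -/
theorem path_to_center (n : ℕ) (hn : 1 ≤ n) (A P : Matrix (Fin n) (Fin n) ℂ)
    (θ : Fin n → ℝ) (k : ℕ) (hk : k < n)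
    (hSU : A * Aᴴ = 1 ∧ A.det = 1)
    (hP : P * Pᴴ = 1)
    (hθ : ∀ j, θ j ∈ Set.Ico (0 : ℝ) (2 * Real.pi))
    (hA : A = P * Matrix.diagonal (fun j => Complex.exp (Complex.I * θ j)) * Pᴴ)
    (hsum : ∑ j, θ j = 2 * Real.pi * k)
    (γ : ℝ → Matrix (Fin n) (Fin n) ℂ)
    (hγ : ∀ t : ℝ, γ t = P * Matrix.diagonal (fun j =>
      Complex.exp (Complex.I * (t * θ j + (1 - t) * (2 * Real.pi * k / n)))) * Pᴴ) :
    ContinuousOn γ (Set.Icc 0 1) ∧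
    γ 0 = Complex.exp (Complex.I * (2 * Real.pi * k / n)) • (1 : Matrix (Fin n) (Fin n) ℂ) ∧
    γ 1 = A ∧
    ∀ t ∈ Set.Icc (0 : ℝ) 1, γ t * (γ t)ᴴ = 1 ∧ (γ t).det = 1 := by
  have hP' : Pᴴ * P = 1 := mul_eq_one_comm.mp hP
  have hn0 : (n : ℂ) ≠ 0 := by
    exact_mod_cast (by omega : n ≠ 0)
  have hsumC : ∑ j, (θ j : ℂ) = 2 * Real.pi * k := by
    exact_mod_cast hsum
  refine ⟨?_, ?_, ?_, ?_⟩
  · have hc : Continuous γ := by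
      have : γ = fun t : ℝ => P * Matrix.diagonal (fun j =>
        Complex.exp (Complex.I * (t * θ j + (1 - t) * (2 * Real.pi * k / n)))) * Pᴴ :=
        funext hγ
      rw [this]
      refine (continuous_const.matrix_mul (Continuous.matrix_diagonal ?_)).matrix_mul
        continuous_const
      fun_prop
    exact hc.continuousOn
  · have hd : Matrix.diagonal (fun _ : Fin n => Complex.exp (Complex.I * (2 * Real.pi * k / n)))
        = Complex.exp (Complex.I * (2 * Real.pi * k / n)) • (1 : Matrix (Fin n) (Fin n) ℂ) := by
      rw [Matrix.smul_one_eq_diagonal]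
    rw [hγ]
    simp only [Complex.ofReal_zero, zero_mul, zero_add, sub_zero, one_mul]
    rw [hd, Matrix.mul_smul, Matrix.mul_one, Matrix.smul_mul, hP]
  · rw [hγ, hA]
    simp
  · intro t _
    constructor
    · have hD : ∀ d : Fin n → ℂ, (∀ j, d j * star (d j) = 1) →
          (P * Matrix.diagonal d * Pᴴ) * (P * Matrix.diagonal d * Pᴴ)ᴴ = 1 := by
        intro d hd
        have h1 : Matrix.diagonal d * (Matrix.diagonal d)ᴴ = 1 := by
          rw [Matrix.diagonal_conjTranspose, Matrix.diagonal_mul_diagonal, ← Matrix.diagonal_one]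
          congr 1
          funext j
          exact hd j
        calc _ = P * (Matrix.diagonal d * ((Pᴴ * P) * (Matrix.diagonal d)ᴴ)) * Pᴴ := by
              simp only [Matrix.conjTranspose_mul, Matrix.conjTranspose_conjTranspose,
                Matrix.mul_assoc]
          _ = 1 := by rw [hP', Matrix.one_mul, h1, Matrix.mul_one, hP]
      rw [hγ]
      apply hD
      intro j
      rw [Complex.star_def, ← Complex.exp_conj, ← Complex.exp_add, ← Complex.exp_zero]
      congr 1
      have h2 : (starRingEnd ℂ) 2 = 2 := Complex.conj_ofNat 2
      simp [h2]
    · rw [hγ, Matrix.det_mul, Matrix.det_mul, Matrix.det_diagonal, mul_right_comm,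
        ← Matrix.det_mul, hP, Matrix.det_one, one_mul, ← Complex.exp_sum, ← Finset.mul_sum,
        Finset.sum_add_distrib, ← Finset.mul_sum, hsumC]
      rw [Complex.exp_eq_one_iff]
      refine ⟨k, ?_⟩
      simp only [Finset.sum_const, Finset.card_univ, Fintype.card_fin, nsmul_eq_mul]
      push_cast
      field_simp
      ring
end

section
/- Let n ≥ 1, let M be any set of n × n complex matrices, and let A ∈ SU(n) commute with every element of M. Suppose A is unitarily diagonalized as A = P·D·Pᴴ with P unitary and D = diag(e^{iθ_1},…,e^{iθ_n}), all θ_j ∈ [0, 2π), and θ_1 + … + θ_n = 2πk for some k ∈ {0, 1, …, n−1}. Then the path γ(t) = P · diag(e^{i(tθ_1 + (1−t)·2πk/n)}, …, e^{i(tθ_n + (1−t)·2πk/n)}) · Pᴴ satisfies: γ(t) ∈ SU(n) and γ(t) commutes with every element of M for all t ∈ [0,1], γ(0) = e^{2πik/n}·1, and γ(1) = A. In particular A is joined to the central element e^{2πik/n}·1 by a path lying entirely in MSU(n). -/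
open Matrix

theorem aux_inj {a b : ℝ} (ha : a ∈ Set.Ico (0 : ℝ) (2 * Real.pi))
    (hb : b ∈ Set.Ico (0 : ℝ) (2 * Real.pi))
    (h : Complex.exp (Complex.I * a) = Complex.exp (Complex.I * b)) : a = b := by
  obtain ⟨m, hm⟩ := Complex.exp_eq_exp_iff_exists_int.1 h
  have h1 : a = b + m * (2 * Real.pi) := by
    have := congrArg Complex.im hm
    simpa using this
  have hpi := Real.pi_pos
  have hm1 : m < 1 := by
    by_contra hc
    have : (1 : ℝ) ≤ m := by exact_mod_cast not_lt.1 hc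
    nlinarith [ha.2, hb.1]
  have hm2 : -1 < m := by
    by_contra hc
    have : (m : ℝ) ≤ -1 := by exact_mod_cast not_lt.1 hc
    nlinarith [ha.1, hb.2]
  have : m = 0 := by omega
  subst this
  simpa using h1

/-- Let `M` be any set of `n × n` complex matrices and let `A ∈ SU(n)` commute
with every element of `M`.  Suppose `A = P D Pᴴ` with `P` unitary,
`D = diag(e^{iθ_1},…,e^{iθ_n})`, all `θ_j ∈ [0, 2π)`, and `Σ θ_j = 2πk` with `0 ≤ k < n`.
Then `γ(t) = P · diag(e^{i(tθ_j + (1−t)·2πk/n)})_j · Pᴴ` is a path lying in `MSU(n)` from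
the central element `e^{2πik/n}·1` to `A`. -/
theorem path_to_center_in_MSU (n : ℕ) (hn : 1 ≤ n)
    (M : Set (Matrix (Fin n) (Fin n) ℂ))
    (A P : Matrix (Fin n) (Fin n) ℂ)
    (θ : Fin n → ℝ) (k : ℕ) (hk : k < n)
    (hSU : A * Aᴴ = 1 ∧ A.det = 1)
    (hcomm : ∀ B ∈ M, A * B = B * A)
    (hP : P * Pᴴ = 1)
    (hθ : ∀ j, θ j ∈ Set.Ico (0 : ℝ) (2 * Real.pi))
    (hA : A = P * Matrix.diagonal (fun j => Complex.exp (Complex.I * θ j)) * Pᴴ)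
    (hsum : ∑ j, θ j = 2 * Real.pi * k)
    (γ : ℝ → Matrix (Fin n) (Fin n) ℂ)
    (hγ : ∀ t : ℝ, γ t = P * Matrix.diagonal (fun j =>
      Complex.exp (Complex.I * (t * θ j + (1 - t) * (2 * Real.pi * k / n)))) * Pᴴ) :
    ContinuousOn γ (Set.Icc 0 1) ∧
    γ 0 = Complex.exp (Complex.I * (2 * Real.pi * k / n)) • (1 : Matrix (Fin n) (Fin n) ℂ) ∧
    γ 1 = A ∧
    ∀ t ∈ Set.Icc (0 : ℝ) 1,
      (γ t * (γ t)ᴴ = 1 ∧ (γ t).det = 1) ∧ ∀ B ∈ M, γ t * B = B * γ t := by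
  have hP' : Pᴴ * P = 1 := mul_eq_one_comm.1 hP
  have hn0 : (n : ℂ) ≠ 0 := by
    have : n ≠ 0 := by omega
    exact_mod_cast this
  have hdetP : P.det * Pᴴ.det = 1 := by rw [← Matrix.det_mul, hP, Matrix.det_one]
  refine ⟨?_, ?_, ?_, ?_⟩
  · have hc : Continuous γ := by
      rw [funext hγ]
      refine (Continuous.matrix_mul continuous_const (Continuous.matrix_diagonal ?_)).matrix_mul
        continuous_const
      fun_prop
    exact hc.continuousOn
  · rw [hγ]
    have : (fun j : Fin n => Complex.exp (Complex.I * (((0 : ℝ) : ℂ) * θ j +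
        (1 - ((0 : ℝ) : ℂ)) * (2 * Real.pi * k / n)))) =
        fun _ => Complex.exp (Complex.I * (2 * Real.pi * k / n)) := by
      funext j; simp
    rw [this, ← Matrix.smul_one_eq_diagonal]
    simp [hP]
  · rw [hγ, hA]; simp
  · intro t _
    refine ⟨⟨?_, ?_⟩, ?_⟩
    · rw [hγ]
      set d : Fin n → ℂ := fun j =>
        Complex.exp (Complex.I * (t * θ j + (1 - t) * (2 * Real.pi * k / n))) with hd
      have hdd : diagonal d * (diagonal d)ᴴ = 1 := by
        rw [Matrix.diagonal_conjTranspose, Matrix.diagonal_mul_diagonal, ← Matrix.diagonal_one]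
        congr 1
        funext j
        simp only [hd, Pi.star_apply, Complex.star_def]
        rw [← Complex.exp_conj, ← Complex.exp_add]
        have h2 : (starRingEnd ℂ) 2 = 2 := Complex.conj_ofNat 2
        simp [h2]
      calc P * diagonal d * Pᴴ * (P * diagonal d * Pᴴ)ᴴ
          = P * diagonal d * (Pᴴ * P) * (diagonal d)ᴴ * Pᴴ := by
            simp only [conjTranspose_mul, conjTranspose_conjTranspose, Matrix.mul_assoc]
        _ = P * (diagonal d * (diagonal d)ᴴ) * Pᴴ := by
            rw [hP', Matrix.mul_one, Matrix.mul_assoc P]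
        _ = 1 := by rw [hdd, Matrix.mul_one, hP]
    · rw [hγ, Matrix.det_mul, Matrix.det_mul, Matrix.det_diagonal, mul_right_comm, hdetP, one_mul,
        ← Complex.exp_sum, ← Finset.mul_sum, Finset.sum_add_distrib, ← Finset.mul_sum]
      have hs : ∑ j, (θ j : ℂ) = 2 * Real.pi * k := by exact_mod_cast hsum
      rw [hs, Finset.sum_const, Finset.card_univ, Fintype.card_fin, nsmul_eq_mul]
      rw [Complex.exp_eq_one_iff]
      refine ⟨k, ?_⟩
      push_cast
      field_simp
      ring
    · intro B hB
      have h := hcomm B hB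
      rw [hγ]
      set d : Fin n → ℂ := fun j =>
        Complex.exp (Complex.I * (t * θ j + (1 - t) * (2 * Real.pi * k / n))) with hd
      set e : Fin n → ℂ := fun j => Complex.exp (Complex.I * θ j) with he
      have key : ∀ f : Fin n → ℂ, Pᴴ * (P * diagonal f * Pᴴ * B) * P
          = diagonal f * (Pᴴ * B * P) := by
        intro f
        calc _ = (Pᴴ * P) * diagonal f * (Pᴴ * B * P) := by simp only [Matrix.mul_assoc]
          _ = _ := by rw [hP', Matrix.one_mul]
      have key2 : ∀ f : Fin n → ℂ, Pᴴ * (B * (P * diagonal f * Pᴴ)) * P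
          = (Pᴴ * B * P) * diagonal f := by
        intro f
        calc _ = (Pᴴ * B * P) * diagonal f * (Pᴴ * P) := by simp only [Matrix.mul_assoc]
          _ = _ := by rw [hP', Matrix.mul_one]
      have hC : diagonal e * (Pᴴ * B * P) = (Pᴴ * B * P) * diagonal e := by
        rw [← key, ← key2, ← hA, h]
      have hD : diagonal d * (Pᴴ * B * P) = (Pᴴ * B * P) * diagonal d := by
        ext i j
        have hij := congrFun (congrFun hC i) j
        rw [Matrix.diagonal_mul, Matrix.mul_diagonal] at hij ⊢
        by_cases h0 : (Pᴴ * B * P) i j = 0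
        · simp [h0]
        · rw [mul_comm] at hij
          have := aux_inj (hθ i) (hθ j) (mul_left_cancel₀ h0 hij)
          simp only [hd, this]
          rw [mul_comm]
      rw [← key, ← key2] at hD
      have fin : ∀ X : Matrix (Fin n) (Fin n) ℂ, P * (Pᴴ * X * P) * Pᴴ = X := by
        intro X
        calc _ = (P * Pᴴ) * X * (P * Pᴴ) := by simp only [Matrix.mul_assoc]
          _ = X := by rw [hP, Matrix.one_mul, Matrix.mul_one]
      rw [← fin (P * diagonal d * Pᴴ * B), hD, fin]
end

section
/- Let n ≥ 2 and let M be a set of n × n complex matrices each of which is a permutation matrix P_σ for some permutation σ of Fin n with σ(0) = 0 (every element of M fixes the basis index 0). Then for every k ∈ {0, 1, …, n−1} the central element e^{2πik/n}·1 of SU(n) is joined to the identity matrix by a continuous path lying entirely in MSU(n); explicitly, the path Γ(t) = diag(e^{it(2πk/n − 2πk)}, e^{it·2πk/n}, …, e^{it·2πk/n}) lies in SU(n), commutes with every element of M for all t ∈ [0,1], and satisfies Γ(0) = 1 and Γ(1) = e^{2πik/n}·1. -/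
open Matrix

/-- Let `n ≥ 2` and let `M` be a set of `n × n` permutation matrices `P_σ`
with `σ 0 = 0`.  For every `0 ≤ k < n`, the explicit path
`Γ(t) = diag(e^{it(2πk/n − 2πk)}, e^{it·2πk/n}, …, e^{it·2πk/n})` is a continuous path lying
in `MSU(n)` joining the identity (`t = 0`) to the central element `e^{2πik/n}·1` (`t = 1`). -/
theorem center_connected_in_MSU (n : ℕ) [NeZero n] (hn : 2 ≤ n)
    (M : Set (Matrix (Fin n) (Fin n) ℂ))
    (hM : ∀ B ∈ M, ∃ σ : Equiv.Perm (Fin n), σ 0 = 0 ∧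
      B = Matrix.of fun x y => if x = σ y then (1 : ℂ) else 0)
    (k : ℕ) (hk : k < n)
    (Γ : ℝ → Matrix (Fin n) (Fin n) ℂ)
    (hΓ : ∀ t : ℝ, Γ t = Matrix.diagonal fun j =>
      if j = 0 then Complex.exp (Complex.I * (t * (2 * Real.pi * k / n - 2 * Real.pi * k)))
      else Complex.exp (Complex.I * (t * (2 * Real.pi * k / n)))) :
    Continuous Γ ∧
    Γ 0 = 1 ∧
    Γ 1 = Complex.exp (Complex.I * (2 * Real.pi * k / n)) • (1 : Matrix (Fin n) (Fin n) ℂ) ∧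
    ∀ t ∈ Set.Icc (0 : ℝ) 1,
      (Γ t * (Γ t)ᴴ = 1 ∧ (Γ t).det = 1) ∧ ∀ B ∈ M, Γ t * B = B * Γ t := by
  have hn0 : (n : ℂ) ≠ 0 := by
    exact_mod_cast NeZero.ne n
  refine ⟨?_, ?_, ?_, ?_⟩
  · have h : Γ = fun t : ℝ => Matrix.diagonal fun j : Fin n =>
      if j = 0 then Complex.exp (Complex.I * (t * (2 * Real.pi * k / n - 2 * Real.pi * k)))
      else Complex.exp (Complex.I * (t * (2 * Real.pi * k / n))) := funext hΓ
    rw [h]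
    apply Continuous.matrix_diagonal
    refine continuous_pi fun j => ?_
    split_ifs <;> fun_prop
  · rw [hΓ]
    simp
  · rw [hΓ, Matrix.smul_one_eq_diagonal]
    congr 1
    funext j
    split_ifs
    · rw [Complex.exp_eq_exp_iff_exists_int]
      refine ⟨-(k : ℤ), ?_⟩
      push_cast
      ring
    · simp
  · intro t _
    refine ⟨⟨?_, ?_⟩, ?_⟩
    · rw [hΓ, Matrix.diagonal_conjTranspose, Matrix.diagonal_mul_diagonal, ← Matrix.diagonal_one]
      congr 1
      funext j
      simp only [Pi.star_apply]
      split_ifs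
      all_goals
        rw [Complex.star_def, ← Complex.exp_conj, ← Complex.exp_add, ← Complex.exp_zero]
        congr 1
        have h2 : (starRingEnd ℂ) 2 = 2 := Complex.conj_ofNat 2
        simp [h2]
    · rw [hΓ, Matrix.det_diagonal]
      have h : ∀ j : Fin n, (if j = 0 then
          Complex.exp (Complex.I * (t * (2 * Real.pi * k / n - 2 * Real.pi * k)))
          else Complex.exp (Complex.I * (t * (2 * Real.pi * k / n)))) =
          Complex.exp (Complex.I * (t * (2 * Real.pi * k / n))) *
          (if j = 0 then Complex.exp (-(Complex.I * (t * (2 * Real.pi * k)))) else 1) := by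
        intro j
        split_ifs
        · rw [← Complex.exp_add]
          congr 1
          ring
        · simp
      rw [Finset.prod_congr rfl fun j _ => h j, Finset.prod_mul_distrib, Finset.prod_const,
        Finset.prod_ite_eq' Finset.univ (0 : Fin n)]
      simp only [Finset.card_univ, Fintype.card_fin, Finset.mem_univ, if_true]
      rw [← Complex.exp_nat_mul, ← Complex.exp_add, ← Complex.exp_zero]
      congr 1
      field_simp
      ring
    · intro B hB
      obtain ⟨σ, hσ, rfl⟩ := hM B hB
      rw [hΓ]
      ext x y
      rw [Matrix.diagonal_mul, Matrix.mul_diagonal]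
      simp only [Matrix.of_apply]
      by_cases hxy : x = σ y
      · have h0 : x = 0 ↔ y = 0 := by
          rw [hxy]
          constructor
          · intro h
            exact σ.injective (h.trans hσ.symm)
          · rintro rfl
            exact hσ
        simp only [h0, if_pos hxy, mul_one, one_mul]
      · simp [hxy]
end
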